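/- Every finite extensive-form game with perfect recall possesses a Nash equilibrium in behavioral strategies: there exists a behavioral strategy profile β* such that u^i(β*) ≥ u^i(β^i, β*^{-i}) for every player i ∈ N and every behavioral strategy β^i of player i. -/

import Mathlib

open scoped Classical

noncomputable section

/-- A finite extensive-form game.  Actions are labelled by natural numbers drawn from the
finite pool `actFinset`; a history is the list of actions taken so far; players are `Fin n`
and `P h = none` means that the chance player moves after `h`.  The information sets of
player `i` are `Info i j` for `j < m i`, and `infoIdx h` is the index of the information
set containing a nonterminal history `h` at which some player moves.  Payoffs `u i h` are
relevant on terminal histories. -/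
structure EFG where
  n : ℕ
  actFinset : Finset ℕ
  H : Finset (List ℕ)
  P : List ℕ → Option (Fin n)
  fc : List ℕ → ℕ → ℝ
  m : Fin n → ℕ
  Info : Fin n → ℕ → Finset (List ℕ)
  infoIdx : List ℕ → ℕ
  u : Fin n → List ℕ → ℝ
  empty_mem : ([] : List ℕ) ∈ H
  prefixClosed : ∀ h ∈ H, ∀ h' : List ℕ, h' <+: h → h' ∈ H
  act_mem : ∀ (h : List ℕ) (a : ℕ), h ++ [a] ∈ H → a ∈ actFinset
  fc_nonneg : ∀ h a, 0 ≤ fc h a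
  fc_sum : ∀ h ∈ H, P h = none → (∃ a, h ++ [a] ∈ H) →
    ∑ a ∈ actFinset.filter (fun a => h ++ [a] ∈ H), fc h a = 1
  info_spec : ∀ (i : Fin n) (j : ℕ) (h : List ℕ), j < m i →
    (h ∈ Info i j ↔ h ∈ H ∧ P h = some i ∧ (∃ a, h ++ [a] ∈ H) ∧ infoIdx h = j)
  infoIdx_lt : ∀ (i : Fin n), ∀ h ∈ H, P h = some i → (∃ a, h ++ [a] ∈ H) → infoIdx h < m i
  info_nonempty : ∀ (i : Fin n) (j : ℕ), j < m i → (Info i j).Nonempty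
  info_actions : ∀ (i : Fin n) (j : ℕ), j < m i → ∀ h ∈ Info i j, ∀ h' ∈ Info i j,
    ∀ a : ℕ, (h ++ [a] ∈ H ↔ h' ++ [a] ∈ H)
  act_unique : ∀ (h h' : List ℕ) (a : ℕ), h ∈ H → h' ∈ H → h ++ [a] ∈ H → h' ++ [a] ∈ H →
    P h = P h' ∧ infoIdx h = infoIdx h'

namespace EFG

/-- Behavioral strategy profiles (player, information-set index, action ↦ probability). -/
abbrev Profile (G : EFG) : Type := Fin G.n → ℕ → ℕ → ℝ

/-- Belief systems (player, information-set index, history ↦ probability). -/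
abbrev Belief (G : EFG) : Type := Fin G.n → ℕ → List ℕ → ℝ

variable (G : EFG)

/-- The set `Z` of terminal histories. -/
def Zset : Finset (List ℕ) := G.H.filter fun h => ∀ a : ℕ, h ++ [a] ∉ G.H

/-- The set `A(h)` of actions available after a history. -/
def A (h : List ℕ) : Finset ℕ := G.actFinset.filter fun a => h ++ [a] ∈ G.H

/-- The common action set `A(I_i^j)` of an information set. -/
def infoA (i : Fin G.n) (j : ℕ) : Finset ℕ := (G.Info i j).sup fun h => G.A h

/-- A behavioral strategy of player `i`: a probability distribution on `A(I_i^j)` for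
each information set `I_i^j`. -/
def IsBehStrategy (i : Fin G.n) (b : ℕ → ℕ → ℝ) : Prop :=
  ∀ j < G.m i, (∀ a ∈ G.infoA i j, 0 ≤ b j a) ∧ ∑ a ∈ G.infoA i j, b j a = 1

/-- A behavioral strategy profile. -/
def IsBehProfile (β : G.Profile) : Prop := ∀ i : Fin G.n, G.IsBehStrategy i (β i)

/-- The probability of action `a` at history `h`: the chance distribution if the chance
player moves, and the mover's behavioral strategy otherwise. -/
def moveProb (β : G.Profile) (h : List ℕ) (a : ℕ) : ℝ :=
  (G.P h).elim (G.fc h a) fun i => β i (G.infoIdx h) a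

/-- Player `i`'s record `X_i` of the information sets he encounters along a history and the
actions he takes at them, accumulated starting from the prefix `pre`. -/
def recordFrom (i : Fin G.n) : List ℕ → List ℕ → List (ℕ × ℕ)
  | _, [] => []
  | pre, b :: rest =>
    (if G.P pre = some i then [(G.infoIdx pre, b)] else []) ++ recordFrom i (pre ++ [b]) rest

/-- Perfect recall. -/
def PerfectRecall : Prop :=
  ∀ (i : Fin G.n) (j : ℕ), j < G.m i →
    ∀ h ∈ G.Info i j, ∀ h' ∈ G.Info i j, G.recordFrom i [] h = G.recordFrom i [] h'

/-- Product of the move probabilities along `rest`, continuing from the prefix `pre`. -/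
def prodAlong (β : G.Profile) : List ℕ → List ℕ → ℝ
  | _, [] => 1
  | pre, b :: rest => G.moveProb β pre b * prodAlong β (pre ++ [b]) rest

/-- `ω(h|β)`: the probability that the moves along `h` are played under `β`. -/
def omega (β : G.Profile) (h : List ℕ) : ℝ := G.prodAlong β [] h

/-- `ω(I_i^j|β)`. -/
def omegaInfo (i : Fin G.n) (j : ℕ) (β : G.Profile) : ℝ := ∑ h ∈ G.Info i j, G.omega β h

/-- Product of the move probabilities along `rest` from `pre`, disregarding player `i`'s
own moves. -/
def prodAlongNot (i : Fin G.n) (β : G.Profile) : List ℕ → List ℕ → ℝ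
  | _, [] => 1
  | pre, b :: rest =>
    (if G.P pre = some i then 1 else G.moveProb β pre b) * prodAlongNot i β (pre ++ [b]) rest

/-- `S^i(h|β)`: probability of the moves along `h`, disregarding player `i`'s own moves. -/
def Sh (i : Fin G.n) (β : G.Profile) (h : List ℕ) : ℝ := G.prodAlongNot i β [] h

/-- `S^i(I_i^j|β)`. -/
def SInfo (i : Fin G.n) (j : ℕ) (β : G.Profile) : ℝ := ∑ h ∈ G.Info i j, G.Sh i β h

/-- Product of the move probabilities along `rest` from `pre`, with the factor at prefixes
lying in `I_i^j` omitted. -/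
def prodAlongSkip (i : Fin G.n) (j : ℕ) (β : G.Profile) : List ℕ → List ℕ → ℝ
  | _, [] => 1
  | pre, b :: rest =>
    (if pre ∈ G.Info i j then 1 else G.moveProb β pre b) * prodAlongSkip i j β (pre ++ [b]) rest

/-- `q ∈ M(a, I_i^j)`: `I_i^q` is a first information set of player `i` after action `a`
(every history in `I_i^q` contains `a`, with no later action of `a` lying in any action set
of player `i`). -/
def FirstAfter (i : Fin G.n) (a : ℕ) (q : ℕ) : Prop :=
  q < G.m i ∧ ∀ h ∈ G.Info i q, ∃ l₁ l₂ : List ℕ,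
    h = l₁ ++ a :: l₂ ∧ ∀ b ∈ l₂, ∀ p < G.m i, b ∉ G.infoA i p

/-- `q ∈ M(I_i^j) = ∪_{a ∈ A(I_i^j)} M(a, I_i^j)`. -/
def MInfo (i : Fin G.n) (j : ℕ) (q : ℕ) : Prop := ∃ a ∈ G.infoA i j, G.FirstAfter i a q

/-- `q ∈ Λ(a, I_i^j)`: every history in `I_i^q` contains the action `a`. -/
def LambdaSet (i : Fin G.n) (a : ℕ) (q : ℕ) : Prop :=
  q < G.m i ∧ ∀ h ∈ G.Info i q, ∃ l₁ l₂ : List ℕ, h = l₁ ++ a :: l₂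

/-- `ϱ^i_{I_i^j}(β, β̃)`: replace player `i`'s component of `β` by that of `β̃` at every
information set `I_i^q` such that some history in `I_i^q` contains an action of `A(I_i^j)`. -/
def rho (i : Fin G.n) (j : ℕ) (β βt : G.Profile) : G.Profile := fun p q =>
  if p = i ∧ ∃ h ∈ G.Info i q, ∃ b ∈ h, b ∈ G.infoA i j then βt i q else β p q

/-- A belief system: a probability distribution on each information set. -/
def IsBelief (μ : G.Belief) : Prop :=
  ∀ (i : Fin G.n) (j : ℕ), j < G.m i →
    (∀ h ∈ G.Info i j, 0 ≤ μ i j h) ∧ ∑ h ∈ G.Info i j, μ i j h = 1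

/-- A self-independent belief system for `β`:
`S^i(I_i^j|β) · μ^i_{I_i^j}(h) = S^i(h|β)`. -/
def SelfIndep (β : G.Profile) (μ : G.Belief) : Prop :=
  ∀ (i : Fin G.n) (j : ℕ), j < G.m i → ∀ h ∈ G.Info i j,
    G.SInfo i j β * μ i j h = G.Sh i β h

/-- Auxiliary for `ν`: scan `rest` from `pre` for the subhistory lying in `I_i^j`, then
weight by the belief and multiply the move probabilities of the remaining moves (the move
taken at the subhistory itself being skipped). -/
def nuAux (i : Fin G.n) (j : ℕ) (β : G.Profile) (w : List ℕ → ℝ) : List ℕ → List ℕ → ℝ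
  | _, [] => 0
  | pre, b :: rest =>
    if pre ∈ G.Info i j then w pre * G.prodAlong β (pre ++ [b]) rest
    else nuAux i j β w (pre ++ [b]) rest

/-- `ν^i_{I_i^j}(h | a, β^{-I_i^j}, μ)` (it does not involve the component of `β` at
`I_i^j`). -/
def nu (i : Fin G.n) (j : ℕ) (β : G.Profile) (μ : G.Belief) (h : List ℕ) : ℝ :=
  G.nuAux i j β (μ i j) [] h

/-- `u^i((a, β^{-I_i^j}) ∧ I_i^j)`. -/
def uWedgeAct (i : Fin G.n) (j : ℕ) (a : ℕ) (β : G.Profile) : ℝ :=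
  ∑ h ∈ G.Zset.filter (fun h => a ∈ h), G.u i h * G.prodAlongSkip i j β [] h

/-- `u^i(β ∧ I_i^j)`. -/
def uWedge (i : Fin G.n) (j : ℕ) (β : G.Profile) : ℝ :=
  ∑ h ∈ G.Zset.filter (fun h => ∃ b ∈ h, b ∈ G.infoA i j), G.u i h * G.omega β h

/-- The conditional expected payoff `u^i(a, β^{-I_i^j}, μ | I_i^j)`. -/
def uCond (i : Fin G.n) (j : ℕ) (a : ℕ) (β : G.Profile) (μ : G.Belief) : ℝ :=
  ∑ h ∈ G.Zset.filter (fun h => a ∈ h), G.u i h * G.nu i j β μ h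

/-- The expected payoff `u^i(β)`. -/
def uExp (i : Fin G.n) (β : G.Profile) : ℝ := ∑ h ∈ G.Zset, G.u i h * G.omega β h

/-- The profile obtained from `β` by replacing all of player `i`'s components by `b`. -/
def replace (β : G.Profile) (i : Fin G.n) (b : ℕ → ℕ → ℝ) : G.Profile :=
  fun p => if p = i then b else β p

/-- `β` is a Nash equilibrium in behavioral strategies. -/
def IsNash (β : G.Profile) : Prop :=
  G.IsBehProfile β ∧ ∀ (i : Fin G.n) (b : ℕ → ℕ → ℝ), G.IsBehStrategy i b →
    G.uExp i (G.replace β i b) ≤ G.uExp i β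

/-- `(β, β̃, μ)` satisfies the Nash characterization (Definition 2 of the paper). -/
def NashChar (β βt : G.Profile) (μ : G.Belief) : Prop :=
  (∀ (i : Fin G.n) (j : ℕ), j < G.m i → ∀ a' ∈ G.infoA i j, ∀ a'' ∈ G.infoA i j,
    G.uWedgeAct i j a' (G.rho i j β βt) < G.uWedgeAct i j a'' (G.rho i j β βt) →
    β i j a' = 0) ∧
  (∀ (i : Fin G.n) (j : ℕ), j < G.m i → ∀ a' ∈ G.infoA i j, ∀ a'' ∈ G.infoA i j,
    G.uCond i j a' (G.rho i j β βt) μ < G.uCond i j a'' (G.rho i j β βt) μ →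
    βt i j a' = 0) ∧
  G.IsBelief μ ∧ G.SelfIndep β μ

/-- `r` is the root of a subgame: every information set lies entirely inside or entirely
outside the set of histories extending `r`. -/
def IsSubgameRoot (r : List ℕ) : Prop :=
  r ∈ G.H ∧ ∀ (i : Fin G.n) (j : ℕ), j < G.m i →
    (∀ h ∈ G.Info i j, r <+: h) ∨ ∀ h ∈ G.Info i j, ¬ r <+: h

/-- The depth `g` of the smallest subgame containing `A(I_i^j)` (the length of the longest
subgame root preceding every history of `I_i^j`). -/
def sgDepthInfo (i : Fin G.n) (j : ℕ) : ℕ :=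
  (G.H.filter fun r => G.IsSubgameRoot r ∧ ∀ h ∈ G.Info i j, r <+: h).sup List.length

/-- The depth `q(h)` of the smallest subgame containing the last action of `h`. -/
def sgDepthHist (h : List ℕ) : ℕ :=
  (G.H.filter fun r => G.IsSubgameRoot r ∧ r <+: h.dropLast).sup List.length

/-- `C^i_{I_i^j}(h|β)`: product of move probabilities along `h` within the smallest subgame
containing `A(I_i^j)`. -/
def Ch (i : Fin G.n) (j : ℕ) (β : G.Profile) (h : List ℕ) : ℝ :=
  G.prodAlong β (h.take (G.sgDepthInfo i j)) (h.drop (G.sgDepthInfo i j))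

/-- `C^i_{I_i^j}(I_i^j|β)`. -/
def CInfo (i : Fin G.n) (j : ℕ) (β : G.Profile) : ℝ := ∑ h ∈ G.Info i j, G.Ch i j β h

/-- `u^i((a, β^{-I_i^j}) ⋄ I_i^j)`. -/
def uDiamondAct (i : Fin G.n) (j : ℕ) (a : ℕ) (β : G.Profile) : ℝ :=
  ∑ h ∈ G.Zset.filter (fun h => a ∈ h), G.u i h *
    G.prodAlongSkip i j β (h.take (G.sgDepthInfo i j)) (h.drop (G.sgDepthInfo i j))

/-- `Y^i(h|β)`: like `S^i(h|β)` but within the smallest subgame containing the last action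
of `h`. -/
def Yh (i : Fin G.n) (β : G.Profile) (h : List ℕ) : ℝ :=
  G.prodAlongNot i β (h.take (G.sgDepthHist h)) (h.drop (G.sgDepthHist h))

/-- `Y^i(I_i^j|β)`. -/
def YInfo (i : Fin G.n) (j : ℕ) (β : G.Profile) : ℝ := ∑ h ∈ G.Info i j, G.Yh i β h

/-- The belief condition `Y^i(I_i^j|β) · μ^i_{I_i^j}(h) = Y^i(h|β)`. -/
def YConsistent (β : G.Profile) (μ : G.Belief) : Prop :=
  ∀ (i : Fin G.n) (j : ℕ), j < G.m i → ∀ h ∈ G.Info i j,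
    G.YInfo i j β * μ i j h = G.Yh i β h

/-- The expected payoff of player `i` in the subgame rooted at `r` (payoffs of terminal
histories extending `r`, weighted by the move probabilities within the subgame). -/
def uExpFrom (i : Fin G.n) (β : G.Profile) (r : List ℕ) : ℝ :=
  ∑ h ∈ G.Zset.filter (fun h => r <+: h), G.u i h * G.prodAlong β r (h.drop r.length)

/-- `β` is a subgame perfect equilibrium in behavioral strategies: its restriction to every
subgame is a Nash equilibrium in behavioral strategies of that subgame. -/
def IsSubgamePerfect (β : G.Profile) : Prop :=
  G.IsBehProfile β ∧ ∀ r : List ℕ, G.IsSubgameRoot r →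
    ∀ (i : Fin G.n) (b : ℕ → ℕ → ℝ), G.IsBehStrategy i b →
      G.uExpFrom i (G.replace β i b) r ≤ G.uExpFrom i β r

/-- `(β, β̃, μ)` satisfies the subgame perfect characterization (Definition 6 of the
paper). -/
def SubgameChar (β βt : G.Profile) (μ : G.Belief) : Prop :=
  (∀ (i : Fin G.n) (j : ℕ), j < G.m i → ∀ a' ∈ G.infoA i j, ∀ a'' ∈ G.infoA i j,
    G.uDiamondAct i j a' (G.rho i j β βt) < G.uDiamondAct i j a'' (G.rho i j β βt) →
    β i j a' = 0) ∧
  (∀ (i : Fin G.n) (j : ℕ), j < G.m i → ∀ a' ∈ G.infoA i j, ∀ a'' ∈ G.infoA i j,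
    G.uCond i j a' (G.rho i j β βt) μ < G.uCond i j a'' (G.rho i j β βt) μ →
    βt i j a' = 0) ∧
  G.IsBelief μ ∧ G.YConsistent β μ

/-- `(β, μ)` is a semi-sequential equilibrium. -/
def SemiSeqEq (β : G.Profile) (μ : G.Belief) : Prop :=
  G.IsBehProfile β ∧ G.IsBelief μ ∧ G.SelfIndep β μ ∧
  ∀ (i : Fin G.n) (j : ℕ), j < G.m i → ∀ a' ∈ G.infoA i j, ∀ a'' ∈ G.infoA i j,
    G.uCond i j a' β μ < G.uCond i j a'' β μ → β i j a' = 0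

/-- `(β, μ)` is a subgame perfect semi-sequential equilibrium. -/
def SubgameSemiSeqEq (β : G.Profile) (μ : G.Belief) : Prop :=
  G.IsBehProfile β ∧ G.IsBelief μ ∧ G.YConsistent β μ ∧
  ∀ (i : Fin G.n) (j : ℕ), j < G.m i → ∀ a' ∈ G.infoA i j, ∀ a'' ∈ G.infoA i j,
    G.uCond i j a' β μ < G.uCond i j a'' β μ → β i j a' = 0

/-- `d(I_i^j)`: the number of information sets of player `i` containing a prefix of some
history of `I_i^j` (counting `I_i^j` itself). -/
def dInfo (i : Fin G.n) (j : ℕ) : ℕ :=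
  ((Finset.range (G.m i)).filter
    (fun q => ∃ h ∈ G.Info i j, ∃ p : List ℕ, p <+: h ∧ p ∈ G.Info i q)).card

end EFG

/-!
By perfect recall and Kuhn's theorem, behavioral and mixed strategies induce the same probabilities
on terminal histories, so a mixed equilibrium of the normal form yields a behavioral one. Mixed
equilibria are the fixed points of Nash's improvement map on a product of simplices, and this
product is a retract of the simplex of joint distributions. Brouwer's theorem for a simplex follows
from a closed covering theorem of Knaster–Kuratowski–Mazurkiewicz type, in which Scarf's dominating
sets replace triangulations: finitely many labelled points always contain a set that is dominating
with respect to the labels it carries, by the parity argument of walking through rooms and doors.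
-/

section DominatingSets

theorem card_filter_image_erase_eq_two {α β : Type*} {s : Finset α} {f : α → β}
    (hcard : s.card = (s.image f).card + 1) :
    (s.filter fun a => (s.erase a).image f = s.image f).card = 2 := by
  obtain ⟨a, ha, b, hb, hab, hfab⟩ : ∃ a ∈ s, ∃ b ∈ s, a ≠ b ∧ f a = f b :=
    Finset.exists_ne_map_eq_of_card_lt_of_maps_to (by omega) fun x => Finset.mem_image_of_mem f
  have image_erase : ∀ c ∈ s, ∀ d ∈ s, c ≠ d → f c = f d → (s.erase c).image f = s.image f := by
    intro c hc d hd hcd hfcd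
    rw [← Finset.insert_erase hc, Finset.image_insert, Finset.insert_erase hc, eq_comm,
      Finset.insert_eq_self, hfcd]
    exact Finset.mem_image_of_mem f (Finset.mem_erase.2 ⟨hcd.symm, hd⟩)
  refine Finset.card_eq_two.2 ⟨a, b, hab, Finset.ext fun c => ?_⟩
  simp only [Finset.mem_filter, Finset.mem_insert, Finset.mem_singleton]
  constructor
  · rintro ⟨hc, himage⟩
    have injOn : Set.InjOn f (s.erase c) := by
      rw [← Finset.card_image_iff, himage, Finset.card_erase_of_mem hc]
      omega
    by_contra! hne
    exact hab (injOn (Finset.mem_erase.2 ⟨hne.1.symm, ha⟩)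
      (Finset.mem_erase.2 ⟨hne.2.symm, hb⟩) hfab)
  · rintro (rfl | rfl)
    · exact ⟨ha, image_erase _ ha _ hb hab hfab⟩
    · exact ⟨hb, image_erase _ hb _ ha hab.symm hfab.symm⟩

variable {I Y Λ : Type*} [LinearOrder Λ] {v : I → Y → Λ} {D : Finset Y} {k k' : I} {y y' : Y}

/-- Scarf's dominating (primitive) sets for the orders `v i`, `i ∈ I`, on `Y`: no element of `Y`
is, for every `i`, strictly better than the worst element of `D`. -/
def Dominates (v : I → Y → Λ) (D : Finset Y) : Prop := ∀ y, ∃ i, ∀ d ∈ D, v i y ≤ v i d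

/-- The index `k` can be spared in `D`: each element of `D` is the worst one for some other
index. -/
def IsCritical (v : I → Y → Λ) (D : Finset Y) (k : I) : Prop :=
  ∀ d ∈ D, ∃ i, i ≠ k ∧ ∀ c ∈ D, v i d ≤ v i c

/-- The elements which, for each index other than `k`, are strictly better than the worst element
of `D`. A set obtained by adding an element to `D` is found by searching one of these sets. -/
def improvers (v : I → Y → Λ) (D : Finset Y) (k : I) : Set Y :=
  {y | ∀ i, i ≠ k → ∃ d ∈ D, v i d < v i y}

/-- `m i` is the worst element of `D` for the index `i`. -/
def IsArgmin (v : I → Y → Λ) (D : Finset Y) (m : I → Y) : Prop :=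
  ∀ i, m i ∈ D ∧ ∀ d ∈ D, v i (m i) ≤ v i d

theorem Dominates.mono {D' : Finset Y} (h : Dominates v D') (hsub : D ⊆ D') : Dominates v D :=
  fun y => (h y).imp fun _ hi d hd => hi d (hsub hd)

theorem exists_isArgmin (hD : D.Nonempty) : ∃ m, IsArgmin v D m := by
  choose m hm using fun i => D.exists_min_image (v i) hD
  exact ⟨m, hm⟩

theorem IsArgmin.eq_of_forall_le (hinj : ∀ i, Function.Injective (v i)) {m : I → Y}
    (hm : IsArgmin v D m) (hy : y ∈ D) {i : I} (hle : ∀ d ∈ D, v i y ≤ v i d) : m i = y :=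
  hinj i (((hm i).2 y hy).antisymm (hle _ (hm i).1))

theorem Dominates.exists_argmin_eq (hinj : ∀ i, Function.Injective (v i)) (h : Dominates v D)
    {m : I → Y} (hm : IsArgmin v D m) (hy : y ∈ D) : ∃ i, m i = y :=
  (h y).imp fun _ hi => hm.eq_of_forall_le hinj hy hi

theorem eq_of_mem_improvers (hy : y ∈ improvers v D k) {i : I} (hle : ∀ d ∈ D, v i y ≤ v i d) :
    i = k := by
  by_contra hik
  obtain ⟨d, hd, hlt⟩ := hy i hik
  exact (hle d hd).not_gt hlt

theorem Dominates.eq_of_mem_improvers (h : Dominates v D) (hk : y ∈ improvers v D k)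
    (hk' : y ∈ improvers v D k') : k = k' := by
  obtain ⟨i, hi⟩ := h y
  rw [← _root_.eq_of_mem_improvers hk hi, ← _root_.eq_of_mem_improvers hk' hi]

theorem Dominates.le_of_mem_improvers (h : Dominates v (insert y D))
    (hy' : y' ∈ improvers v D k) : v k y' ≤ v k y := by
  obtain ⟨i, hi⟩ := h y'
  obtain rfl := _root_.eq_of_mem_improvers hy' fun d hd => hi d (Finset.mem_insert_of_mem hd)
  exact hi y (Finset.mem_insert_self y D)

theorem IsCritical.exists_dominates_insert [Finite Y] (hk : IsCritical v D k)
    (h : Dominates v D) (hne : (improvers v D k).Nonempty) :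
    ∃ y ∉ D, Dominates v (insert y D) ∧ y ∈ improvers v D k := by
  obtain ⟨y, hy, hmax⟩ := Set.exists_max_image _ (v k) (Set.toFinite _) hne
  refine ⟨y, fun hyD => ?_, fun z => ?_, hy⟩
  · obtain ⟨i, hik, hi⟩ := hk y hyD
    exact hik (eq_of_mem_improvers hy hi)
  · by_cases hz : z ∈ improvers v D k
    · obtain ⟨i, hi⟩ := h z
      obtain rfl := eq_of_mem_improvers hz hi
      exact ⟨i, (Finset.forall_mem_insert _ _ _).2 ⟨hmax z hz, hi⟩⟩
    · simp only [improvers, Set.mem_ofPred_eq, not_forall, not_exists, not_and, not_lt] at hz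
      obtain ⟨i, hik, hi⟩ := hz
      obtain ⟨d, hd, hlt⟩ := hy i hik
      exact ⟨i, (Finset.forall_mem_insert _ _ _).2 ⟨(hi d hd).trans hlt.le, hi⟩⟩

variable [Fintype I]

theorem Dominates.image_argmin (hinj : ∀ i, Function.Injective (v i)) (h : Dominates v D)
    {m : I → Y} (hm : IsArgmin v D m) : Finset.univ.image m = D := by
  ext y
  simp only [Finset.mem_image, Finset.mem_univ, true_and]
  exact ⟨fun ⟨i, hi⟩ => hi ▸ (hm i).1, h.exists_argmin_eq hinj hm⟩

theorem Dominates.exists_isCritical_mem_improvers (hinj : ∀ i, Function.Injective (v i))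
    (hcard : D.card + 1 = Fintype.card I) (hy : y ∉ D) (h : Dominates v (insert y D)) :
    ∃ k, IsCritical v D k ∧ y ∈ improvers v D k := by
  obtain ⟨m, hm⟩ := exists_isArgmin (v := v) (Finset.insert_nonempty y D)
  have m_injective : Function.Injective m := by
    rw [← Set.injOn_univ, ← Finset.coe_univ, ← Finset.card_image_iff, h.image_argmin hinj hm,
      Finset.card_insert_of_notMem hy, hcard, Finset.card_univ]
  obtain ⟨k, hk⟩ := h.exists_argmin_eq hinj hm (Finset.mem_insert_self y D)
  refine ⟨k, fun d hd => ?_, fun i hik => ?_⟩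
  · obtain ⟨i, rfl⟩ := h.exists_argmin_eq hinj hm (Finset.mem_insert_of_mem hd)
    refine ⟨i, ?_, fun d' hd' => (hm i).2 d' (Finset.mem_insert_of_mem hd')⟩
    rintro rfl
    exact hy (hk ▸ hd)
  · have hne : m i ≠ y := fun hmi => hik (m_injective (hmi.trans hk.symm))
    exact ⟨m i, Finset.mem_of_mem_insert_of_ne (hm i).1 hne,
      ((hm i).2 y (Finset.mem_insert_self y D)).lt_of_ne ((hinj i).ne hne)⟩

theorem isCritical_iff_image_erase_eq (hinj : ∀ i, Function.Injective (v i)) {m : I → Y}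
    (hm : IsArgmin v D m) : IsCritical v D k ↔ (Finset.univ.erase k).image m = D := by
  constructor
  · refine fun hk => Finset.Subset.antisymm (Finset.image_subset_iff.2 fun i _ => (hm i).1) ?_
    intro d hd
    obtain ⟨i, hik, hi⟩ := hk d hd
    exact Finset.mem_image.2 ⟨i, by simp [hik], hm.eq_of_forall_le hinj hd hi⟩
  · intro himage d hd
    rw [← himage] at hd
    obtain ⟨i, hi, rfl⟩ := Finset.mem_image.1 hd
    exact ⟨i, Finset.ne_of_mem_erase hi, (hm i).2⟩

theorem card_isCritical_eq_two (hinj : ∀ i, Function.Injective (v i)) (h : Dominates v D)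
    (hne : D.Nonempty) (hcard : D.card + 1 = Fintype.card I) :
    (Finset.univ.filter (IsCritical v D)).card = 2 := by
  obtain ⟨m, hm⟩ := exists_isArgmin (v := v) hne
  have himage := h.image_argmin hinj hm
  have htwo := card_filter_image_erase_eq_two (s := Finset.univ) (f := m)
    (by rw [himage, hcard, Finset.card_univ])
  rw [himage] at htwo
  simpa only [isCritical_iff_image_erase_eq hinj hm] using htwo

theorem card_insert_dominates_eq [Fintype Y] (hinj : ∀ i, Function.Injective (v i))
    (h : Dominates v D) (hcard : D.card + 1 = Fintype.card I) :
    (Finset.univ.filter fun y => y ∉ D ∧ Dominates v (insert y D)).card =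
      (Finset.univ.filter fun k => IsCritical v D k ∧ (improvers v D k).Nonempty).card := by
  apply le_antisymm
  · refine Finset.card_le_card_of_forall_subsingleton (fun y k => y ∈ improvers v D k) ?_ ?_
    · intro y hy
      obtain ⟨hyD, hins⟩ := (Finset.mem_filter.1 hy).2
      obtain ⟨k, hk, hyk⟩ := hins.exists_isCritical_mem_improvers hinj hcard hyD
      exact ⟨k, by simpa using ⟨hk, y, hyk⟩, hyk⟩
    · rintro k - y ⟨hy, hyk⟩ y' ⟨hy', hyk'⟩
      exact hinj k (((Finset.mem_filter.1 hy').2.2.le_of_mem_improvers hyk).antisymm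
        ((Finset.mem_filter.1 hy).2.2.le_of_mem_improvers hyk'))
  · refine Finset.card_le_card_of_forall_subsingleton (fun k y => y ∈ improvers v D k) ?_ ?_
    · intro k hk
      obtain ⟨hcrit, hne⟩ := (Finset.mem_filter.1 hk).2
      obtain ⟨y, hyD, hins, hyk⟩ := hcrit.exists_dominates_insert h hne
      exact ⟨y, by simpa using ⟨hyD, hins⟩, hyk⟩
    · rintro y - k ⟨-, hk⟩ l ⟨-, hl⟩
      exact h.eq_of_mem_improvers hk hl

/-- The elements `e i` are slack: `e i` is the worst element for the index `i`, and for every other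
index it is better than all elements that are not slack. -/
structure IsSlack (v : I → Y → Λ) (e : I → Y) : Prop where
  le : ∀ i y, v i (e i) ≤ v i y
  lt : ∀ i j y, i ≠ j → y ∉ Set.range e → v i y < v i (e j)

variable {e : I → Y}

theorem even_card_insert_dominates [Fintype Y] (hinj : ∀ i, Function.Injective (v i))
    (he : IsSlack v e) (h : Dominates v D) (hcard : D.card + 1 = Fintype.card I)
    (hD : ∃ d ∈ D, d ∉ Set.range e) :
    Even (Finset.univ.filter fun y => y ∉ D ∧ Dominates v (insert y D)).card := by
  obtain ⟨d, hd, hde⟩ := hD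
  have improvers_nonempty : ∀ k, (improvers v D k).Nonempty := fun k =>
    ⟨e k, fun i hik => ⟨d, hd, he.lt i k d hik hde⟩⟩
  rw [card_insert_dominates_eq hinj h hcard]
  simp only [improvers_nonempty, and_true, card_isCritical_eq_two hinj h ⟨d, hd⟩ hcard, even_two]

theorem dominates_image_slack (he : IsSlack v e) (i₀ : I) :
    Dominates v ((Finset.univ.erase i₀).image e) := by
  intro y
  by_cases hy : ∃ i, e i = y
  · obtain ⟨i, rfl⟩ := hy
    exact ⟨i, fun d _ => he.le i d⟩
  · refine ⟨i₀, fun d hd => ?_⟩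
    obtain ⟨j, hj, rfl⟩ := Finset.mem_image.1 hd
    exact (he.lt i₀ j y (Finset.ne_of_mem_erase hj).symm hy).le

theorem isCritical_image_slack_iff (hinj : ∀ i, Function.Injective (v i)) (he : IsSlack v e)
    (he_inj : Function.Injective e) (hns : ∃ y, y ∉ Set.range e) (i₀ : I) :
    (IsCritical v ((Finset.univ.erase i₀).image e) k ∧
      (improvers v ((Finset.univ.erase i₀).image e) k).Nonempty) ↔ k = i₀ := by
  have mem_image : ∀ i, i ≠ i₀ → e i ∈ (Finset.univ.erase i₀).image e := fun i hi =>
    Finset.mem_image_of_mem e (by simp [hi])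
  constructor
  · rintro ⟨hk, y, hy⟩
    by_contra hki
    obtain ⟨i, hik, hi⟩ := hk (e k) (mem_image k hki)
    obtain rfl : i = i₀ := by
      by_contra hii
      exact hik (he_inj (hinj i ((he.le i _).antisymm (hi _ (mem_image i hii)))))
    obtain ⟨d, hd, hlt⟩ := hy i hik
    replace hlt : v i (e k) < v i y := (hi d hd).trans_lt hlt
    obtain ⟨j, rfl⟩ : y ∈ Set.range e := by
      by_contra hns
      exact (he.lt i k y hik hns).not_gt hlt
    obtain rfl := eq_of_mem_improvers hy fun d _ => he.le j d
    exact hlt.false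
  · rintro rfl
    obtain ⟨y, hy⟩ := hns
    refine ⟨fun d hd => ?_, y, fun i hi => ⟨e i, mem_image i hi, ?_⟩⟩
    · obtain ⟨j, hj, rfl⟩ := Finset.mem_image.1 hd
      exact ⟨j, Finset.ne_of_mem_erase hj, fun d _ => he.le j d⟩
    · exact (he.le i y).lt_of_ne ((hinj i).ne fun hiy => hy ⟨i, hiy⟩)

theorem card_image_slack_add_one (he_inj : Function.Injective e) (i₀ : I) :
    ((Finset.univ.erase i₀).image e).card + 1 = Fintype.card I := by
  rw [Finset.card_image_of_injective _ he_inj, Finset.card_erase_add_one (Finset.mem_univ i₀),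
    Finset.card_univ]

theorem card_insert_dominates_image_slack [Fintype Y] (hinj : ∀ i, Function.Injective (v i))
    (he : IsSlack v e) (he_inj : Function.Injective e) (hns : ∃ y, y ∉ Set.range e) (i₀ : I) :
    (Finset.univ.filter fun y => y ∉ (Finset.univ.erase i₀).image e ∧
      Dominates v (insert y ((Finset.univ.erase i₀).image e))).card = 1 := by
  rw [card_insert_dominates_eq hinj (dominates_image_slack he i₀)
    (card_image_slack_add_one he_inj i₀)]
  simp only [isCritical_image_slack_iff hinj he he_inj hns]
  exact Finset.card_eq_one.2 ⟨i₀, by simp [Finset.ext_iff]⟩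

/-- The doors of the parity argument: dominating sets one element short of `card I` that carry
every label but `i₀`. -/
def IsDoor (v : I → Y → Λ) (l : Y → I) (i₀ : I) (D : Finset Y) : Prop :=
  Dominates v D ∧ D.card + 1 = Fintype.card I ∧ D.image l = Finset.univ.erase i₀

/-- The rooms of the parity argument: dominating sets with `card I` elements. -/
def IsRoom (v : I → Y → Λ) (R : Finset Y) : Prop := Dominates v R ∧ R.card = Fintype.card I

variable {l : Y → I} {i₀ : I} {R : Finset Y}

theorem isDoor_image_slack (he : IsSlack v e) (hl : ∀ i, l (e i) = i) :
    IsDoor v l i₀ ((Finset.univ.erase i₀).image e) := by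
  refine ⟨dominates_image_slack he i₀,
    card_image_slack_add_one (Function.LeftInverse.injective hl) i₀, ?_⟩
  rw [Finset.image_image, show l ∘ e = id from funext hl, Finset.image_id]

theorem IsDoor.eq_image_slack (h : IsDoor v l i₀ D) (hl : ∀ i, l (e i) = i)
    (hD : ∀ d ∈ D, d ∈ Set.range e) : D = (Finset.univ.erase i₀).image e := by
  have e_l : ∀ d ∈ D, e (l d) = d := fun d hd => by
    obtain ⟨i, rfl⟩ := hD d hd
    rw [hl]
  rw [← h.2.2, Finset.image_image, Finset.image_congr (f := e ∘ l) (g := id) e_l, Finset.image_id]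

theorem IsRoom.card_doors (h : IsRoom v R) : (R.powerset.filter (IsDoor v l i₀)).card =
    (R.filter fun y => (R.erase y).image l = Finset.univ.erase i₀).card := by
  symm
  refine Finset.card_nbij R.erase (fun y hy => ?_) ((Finset.erase_injOn R).mono ?_) fun D hD => ?_
  · obtain ⟨hyR, himage⟩ := Finset.mem_filter.1 hy
    exact Finset.mem_filter.2 ⟨Finset.mem_powerset.2 (Finset.erase_subset y R),
      h.1.mono (Finset.erase_subset y R), (Finset.card_erase_add_one hyR).trans h.2, himage⟩
  · exact fun y hy => (Finset.mem_filter.1 hy).1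
  · obtain ⟨hDR, hdoor⟩ := Finset.mem_filter.1 hD
    obtain ⟨y, hy, rfl⟩ := Finset.exists_eq_insert_iff.2
      ⟨Finset.mem_powerset.1 hDR, hdoor.2.1.trans h.2.symm⟩
    exact ⟨y, by simpa [Finset.erase_insert hy] using hdoor.2.2, Finset.erase_insert hy⟩

theorem IsRoom.even_card_doors (h : IsRoom v R) (hR : R.image l ≠ Finset.univ) :
    Even (R.powerset.filter (IsDoor v l i₀)).card := by
  rw [h.card_doors]
  by_cases hne : ∃ y, (R.erase y).image l = Finset.univ.erase i₀
  · obtain ⟨y, hy⟩ := hne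
    have hsub : Finset.univ.erase i₀ ⊆ R.image l :=
      hy ▸ Finset.image_subset_image (Finset.erase_subset y R)
    have hlt : (R.image l).card < Fintype.card I := (Finset.card_lt_iff_ne_univ _).2 hR
    have hcard : (Finset.univ.erase i₀).card + 1 = Fintype.card I := by
      rw [Finset.card_erase_add_one (Finset.mem_univ i₀), Finset.card_univ]
    have himage : Finset.univ.erase i₀ = R.image l :=
      Finset.eq_of_subset_of_card_le hsub (by omega)
    rw [himage, card_filter_image_erase_eq_two (by rw [h.2, ← hcard, himage])]
    exact even_two
  · rw [Finset.filter_false_of_mem fun y _ hy => hne ⟨y, hy⟩]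
    exact Even.zero

theorem IsDoor.card_rooms [Fintype Y] (h : IsDoor v l i₀ D) :
    (Finset.univ.filter fun R => IsRoom v R ∧ D ⊆ R).card =
      (Finset.univ.filter fun y => y ∉ D ∧ Dominates v (insert y D)).card := by
  symm
  refine Finset.card_nbij (insert · D) (fun y hy => ?_) ((Finset.insert_inj_on D).mono ?_)
    fun R hR => ?_
  · obtain ⟨hyD, hins⟩ := (Finset.mem_filter.1 hy).2
    exact Finset.mem_filter.2 ⟨Finset.mem_univ _,
      ⟨hins, (Finset.card_insert_of_notMem hyD).trans h.2.1⟩, Finset.subset_insert y D⟩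
  · exact fun y hy => (Finset.mem_filter.1 hy).2.1
  · obtain ⟨hroom, hDR⟩ := (Finset.mem_filter.1 hR).2
    obtain ⟨y, hy, rfl⟩ := Finset.exists_eq_insert_iff.2 ⟨hDR, h.2.1.trans hroom.2.symm⟩
    exact ⟨y, by simpa using ⟨hy, hroom.1⟩, rfl⟩

theorem sum_card_rooms_eq_sum_card_doors [Fintype Y] :
    ∑ D : Finset Y with IsDoor v l i₀ D, (Finset.univ.filter fun R => IsRoom v R ∧ D ⊆ R).card =
      ∑ R : Finset Y with IsRoom v R, (R.powerset.filter (IsDoor v l i₀)).card := by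
  convert Finset.sum_card_bipartiteAbove_eq_sum_card_bipartiteBelow
    (s := Finset.univ.filter (IsDoor v l i₀)) (t := Finset.univ.filter (IsRoom v))
    (fun D R : Finset Y => D ⊆ R) using 3
  · rw [Finset.bipartiteAbove, Finset.filter_filter]
  · ext D
    simp [Finset.bipartiteBelow, and_comm]

theorem odd_sum_card_rooms [Fintype Y] (hinj : ∀ i, Function.Injective (v i))
    (he : IsSlack v e) (hl : ∀ i, l (e i) = i) (hns : ∃ y, y ∉ Set.range e) (i₀ : I) :
    Odd (∑ D : Finset Y with IsDoor v l i₀ D,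
      (Finset.univ.filter fun R => IsRoom v R ∧ D ⊆ R).card) := by
  have hD₀ := isDoor_image_slack (i₀ := i₀) he hl
  rw [← Finset.add_sum_erase _ _ (Finset.mem_filter.2 ⟨Finset.mem_univ _, hD₀⟩), hD₀.card_rooms,
    card_insert_dominates_image_slack hinj he (Function.LeftInverse.injective hl) hns]
  refine odd_one.add_even (Finset.even_sum _ fun D hD => ?_)
  obtain ⟨hne, hdoor⟩ := Finset.mem_erase.1 hD
  replace hdoor : IsDoor v l i₀ D := (Finset.mem_filter.1 hdoor).2
  rw [hdoor.card_rooms]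
  refine even_card_insert_dominates hinj he hdoor.1 hdoor.2.1 ?_
  by_contra! hslack
  exact hne (hdoor.eq_image_slack hl hslack)

theorem exists_dominates_image_eq_univ [Finite Y] [Nonempty I]
    (hinj : ∀ i, Function.Injective (v i)) (he : IsSlack v e) (hl : ∀ i, l (e i) = i)
    (hns : ∃ y, y ∉ Set.range e) : ∃ D, Dominates v D ∧ D.image l = Finset.univ := by
  have := Fintype.ofFinite Y
  obtain ⟨i₀⟩ := ‹Nonempty I›
  by_contra! hno
  have hodd := odd_sum_card_rooms hinj he hl hns i₀
  rw [sum_card_rooms_eq_sum_card_doors] at hodd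
  refine Nat.not_even_iff_odd.2 hodd (Finset.even_sum _ fun R hR => ?_)
  have hroom : IsRoom v R := (Finset.mem_filter.1 hR).2
  exact hroom.even_card_doors (hno R hroom.1)

variable {X α : Type*} [Fintype X]

/-- The functions `u i` made injective by a lexicographic tie-breaking rule and extended to a slack
element for each index. -/
def withSlack (u : I → X → α) (i : I) (y : X ⊕ I) :
    WithBot (WithTop α) ×ₗ Fin (Fintype.card (X ⊕ I)) :=
  toLex (y.elim (fun x => ((u i x : WithTop α) : WithBot (WithTop α)))
    fun j => if j = i then ⊥ else ⊤, Fintype.equivFin (X ⊕ I) y)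

theorem withSlack_injective (u : I → X → α) (i : I) : Function.Injective (withSlack u i) :=
  fun _ _ h => (Fintype.equivFin (X ⊕ I)).injective (congrArg (fun p => (ofLex p).2) h)

variable [LinearOrder α]

theorem withSlack_inr_lt_inl (u : I → X → α) (i : I) (x : X) :
    withSlack u i (.inr i) < withSlack u i (.inl x) :=
  Prod.Lex.toLex_lt_toLex.2 <| .inl <| by simp

theorem le_of_withSlack_inl_le {u : I → X → α} {i : I} {x x' : X}
    (h : withSlack u i (.inl x) ≤ withSlack u i (.inl x')) : u i x ≤ u i x' := by
  simpa [withSlack] using Prod.Lex.monotone_fst _ _ h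

theorem isSlack_withSlack (u : I → X → α) : IsSlack (withSlack u) Sum.inr where
  le i y := by
    rcases y with x | j
    · exact (withSlack_inr_lt_inl u i x).le
    · rcases eq_or_ne j i with rfl | hji
      · exact le_rfl
      · exact (Prod.Lex.toLex_lt_toLex.2 <| .inl <| by simp [hji]).le
  lt i j y hij hy := by
    rcases y with x | j'
    · exact Prod.Lex.toLex_lt_toLex.2 <| .inl <| by
        simpa [hij.symm] using WithBot.coe_lt_coe.2 (WithTop.coe_lt_top (u i x))
    · exact absurd ⟨j', rfl⟩ hy

end DominatingSets

theorem exists_scarf_set {I X α : Type*} [Finite I] [Finite X] [LinearOrder α] [Nonempty X]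
    (u : I → X → α) (l : X → I) :
    ∃ S : Finset X, S.Nonempty ∧ ∀ x, ∃ i ∈ S.image l, ∀ s ∈ S, u i x ≤ u i s := by
  have := Fintype.ofFinite I
  have := Fintype.ofFinite X
  have : Nonempty I := ‹Nonempty X›.map l
  obtain ⟨D, hD, himage⟩ := exists_dominates_image_eq_univ (e := Sum.inr) (l := Sum.elim l id)
    (withSlack_injective u) (isSlack_withSlack u) (fun _ => rfl)
    ⟨.inl (Classical.arbitrary X), by simp⟩
  have key : ∀ x, ∃ i ∈ D.toLeft.image l, ∀ s ∈ D.toLeft, u i x ≤ u i s := by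
    intro x
    obtain ⟨i, hi⟩ := hD (.inl x)
    refine ⟨i, ?_, fun s hs => le_of_withSlack_inl_le (hi _ (Finset.mem_toLeft.1 hs))⟩
    obtain ⟨y, hyD, hy⟩ := Finset.mem_image.1 (himage ▸ Finset.mem_univ i)
    rcases y with s | j
    · exact Finset.mem_image.2 ⟨s, Finset.mem_toLeft.2 hyD, hy⟩
    · obtain rfl : j = i := hy
      exact absurd (hi _ hyD) (withSlack_inr_lt_inl u j x).not_ge
  obtain ⟨i, hi, -⟩ := key (Classical.arbitrary X)
  exact ⟨D.toLeft, Finset.image_nonempty.1 ⟨i, hi⟩, key⟩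

section FixedPoints

open Filter Topology

variable {T : Type*} [Fintype T]

theorem continuous_stdSimplex_apply (i : T) : Continuous fun x : stdSimplex ℝ T => x i :=
  (continuous_apply i).comp continuous_subtype_val

theorem exists_corner_of_labelling {X : Finset (stdSimplex ℝ T)} (hX : X.Nonempty)
    (l : stdSimplex ℝ T → T) :
    ∃ b ∈ Set.Icc (0 : T → ℝ) 1, (∀ x ∈ X, ∃ i, x i ≤ b i) ∧
      ∀ i, 0 < b i → ∃ s, l s = i ∧ b ≤ s := by
  have : Nonempty X := hX.to_subtype
  obtain ⟨S, hS, hdom⟩ := exists_scarf_set (fun i (x : X) => x.1 i) fun x => l x.1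
  let b : T → ℝ := fun i =>
    if i ∈ S.image (fun x => l x.1) then S.inf' hS fun s => s.1 i else 0
  have b_le : ∀ s ∈ S, b ≤ s.1 := by
    intro s hs i
    unfold b
    split_ifs
    · exact Finset.inf'_le _ hs
    · exact stdSimplex.zero_le s.1 i
  refine ⟨b, ⟨fun i => ?_, ?_⟩, fun x hx => ?_, fun i hi => ?_⟩
  · unfold b
    split_ifs
    · exact Finset.le_inf' _ _ fun s _ => stdSimplex.zero_le s.1 i
    · exact le_rfl
  · obtain ⟨s, hs⟩ := hS
    exact fun i => (b_le s hs i).trans (stdSimplex.le_one s.1 i)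
  · obtain ⟨i, hiS, hi⟩ := hdom ⟨x, hx⟩
    exact ⟨i, by simpa only [b, if_pos hiS] using Finset.le_inf' hS _ hi⟩
  · have hiS : i ∈ S.image fun x => l x.1 := by
      by_contra hiS
      exact hi.ne' (if_neg hiS)
    obtain ⟨s, hs, hls⟩ := Finset.mem_image.1 hiS
    exact ⟨s.1, hls, b_le s hs⟩

theorem exists_lt_of_sum_lt_one [Nonempty T] {b : T → ℝ} (hb : 0 ≤ b) (hsum : ∑ i, b i < 1) :
    ∃ y : stdSimplex ℝ T, ∀ i, b i < y i := by
  set δ := (1 - ∑ i, b i) / Fintype.card T with hδ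
  have δ_pos : 0 < δ := div_pos (sub_pos.2 hsum) (by exact_mod_cast Fintype.card_pos)
  refine ⟨⟨fun i => b i + δ, fun i => add_nonneg (hb i) δ_pos.le, ?_⟩, fun i => ?_⟩
  · rw [Finset.sum_add_distrib, Finset.sum_const, Finset.card_univ, nsmul_eq_mul, hδ,
      mul_div_cancel₀ _ (by exact_mod_cast Fintype.card_ne_zero)]
    ring
  · exact lt_add_of_pos_right (b i) δ_pos

theorem stdSimplex_eq_of_le {b : T → ℝ} (hsum : 1 ≤ ∑ i, b i) {s : stdSimplex ℝ T}
    (hle : b ≤ s) : b = s := by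
  funext i
  refine (Finset.sum_eq_sum_iff_of_le fun i _ => hle i).1 ?_ i (Finset.mem_univ i)
  exact (Finset.sum_le_sum fun i _ => hle i).antisymm ((stdSimplex.sum_eq_one s).trans_le hsum)

theorem isClosed_lowerClosure_image_val {F : Set (stdSimplex ℝ T)} (hF : IsClosed F) :
    IsClosed (lowerClosure (Subtype.val '' F) : Set (T → ℝ)) := by
  refine (hF.isCompact.image continuous_subtype_val).isClosed.lowerClosure_pi ⟨1, ?_⟩
  rintro - ⟨x, -, rfl⟩
  exact stdSimplex.le_one x

/-- The limit of the corners along an ultrafilter refining the inclusion order on finite sets of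
points plays the role of the limit of finer and finer triangulations. -/
theorem exists_limit_corner [Nonempty T] {F : T → Set (stdSimplex ℝ T)}
    (hclosed : ∀ i, IsClosed (F i)) (hcover : ∀ x, ∃ i, x ∈ F i) :
    ∃ b : T → ℝ, 0 ≤ b ∧ 1 ≤ ∑ i, b i ∧ ∀ i, 0 < b i → ∃ s ∈ F i, b ≤ s := by
  choose l hl using hcover
  choose! corner corner_mem corner_dom corner_le using
    fun (X : Finset (stdSimplex ℝ T)) (hX : X.Nonempty) => exists_corner_of_labelling hX l
  let U : Ultrafilter (Finset (stdSimplex ℝ T)) := Ultrafilter.of atTop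
  have eventually_mem : ∀ x, ∀ᶠ X : Finset (stdSimplex ℝ T) in U, x ∈ X := fun x =>
    ((eventually_ge_atTop {x}).mono fun X hX => Finset.singleton_subset_iff.1 hX).filter_mono
      (Ultrafilter.of_le atTop)
  have eventually_nonempty : ∀ᶠ X : Finset (stdSimplex ℝ T) in U, X.Nonempty :=
    (eventually_mem (Classical.arbitrary _)).mono fun X hX => ⟨_, hX⟩
  obtain ⟨b, hb, hlim⟩ := isCompact_Icc.ultrafilter_le_nhds (U.map corner)
    (le_principal_iff.2 (eventually_nonempty.mono corner_mem))
  replace hlim : Tendsto corner U (𝓝 b) := hlim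
  refine ⟨b, hb.1, ?_, fun i hi => ?_⟩
  · by_contra! hsum
    obtain ⟨y, hy⟩ := exists_lt_of_sum_lt_one hb.1 hsum
    have eventually_lt : ∀ᶠ X in U, ∀ i, corner X i < y i :=
      eventually_all.2 fun i => (tendsto_pi_nhds.1 hlim i).eventually_lt_const (hy i)
    obtain ⟨X, hlt, hyX⟩ := (eventually_lt.and (eventually_mem y)).exists
    obtain ⟨i, hi⟩ := corner_dom X ⟨y, hyX⟩ y hyX
    exact (hlt i).not_ge hi
  · have eventually_lower : ∀ᶠ X in U, corner X ∈ lowerClosure (Subtype.val '' F i) := by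
      filter_upwards [(tendsto_pi_nhds.1 hlim i).eventually_const_lt hi, eventually_nonempty]
        with X hpos hX
      obtain ⟨s, rfl, hs⟩ := corner_le X hX i hpos
      exact ⟨s, Set.mem_image_of_mem _ (hl s), hs⟩
    obtain ⟨-, ⟨s, hs, rfl⟩, hbs⟩ :=
      (isClosed_lowerClosure_image_val (hclosed i)).mem_of_tendsto hlim eventually_lower
    exact ⟨s, hs, hbs⟩

theorem exists_forall_mem_of_isClosed_cover [Nonempty T] {F : T → Set (stdSimplex ℝ T)}
    (hclosed : ∀ i, IsClosed (F i)) (hcover : ∀ x, ∃ i, x ∈ F i)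
    (hface : ∀ i x, x i = 0 → x ∈ F i) : ∃ x, ∀ i, x ∈ F i := by
  obtain ⟨b, hb, hsum, hF⟩ := exists_limit_corner hclosed hcover
  obtain ⟨j, -, hj⟩ := (Finset.sum_pos_iff_of_nonneg fun i _ => hb i).1 (zero_lt_one.trans_le hsum)
  obtain ⟨x, -, hx⟩ := hF j hj
  have hbx := stdSimplex_eq_of_le hsum hx
  refine ⟨x, fun i => ?_⟩
  rcases (hb i).eq_or_lt with hi | hi
  · exact hface i x (hbx ▸ hi.symm)
  · obtain ⟨y, hy, hby⟩ := hF i hi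
    rwa [stdSimplex.ext (hbx.symm.trans (stdSimplex_eq_of_le hsum hby))]

theorem exists_fixedPoint_stdSimplex [Nonempty T] {f : stdSimplex ℝ T → stdSimplex ℝ T}
    (hf : Continuous f) : ∃ x, f x = x := by
  have hcover : ∀ x, ∃ i, x i ≤ f x i := by
    intro x
    by_contra! hlt
    have hsum := Finset.sum_lt_sum_of_nonempty Finset.univ_nonempty fun i _ => hlt i
    simp only [stdSimplex.sum_eq_one, lt_irrefl] at hsum
  obtain ⟨x, hx⟩ := exists_forall_mem_of_isClosed_cover (F := fun i => {x | x i ≤ f x i})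
    (fun i => isClosed_le (continuous_stdSimplex_apply i) ((continuous_stdSimplex_apply i).comp hf))
    hcover fun i x hi => hi.trans_le (stdSimplex.zero_le (f x) i)
  exact ⟨x, (stdSimplex.ext (stdSimplex_eq_of_le (stdSimplex.sum_eq_one x).ge hx)).symm⟩

theorem exists_fixedPoint_of_leftInverse {X Y : Type*} [TopologicalSpace X] [TopologicalSpace Y]
    (hY : ∀ g : Y → Y, Continuous g → ∃ y, g y = y) {e : X → Y} {r : Y → X} (he : Continuous e)
    (hr : Continuous r) (hre : Function.LeftInverse r e) {f : X → X} (hf : Continuous f) :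
    ∃ x, f x = x := by
  obtain ⟨y, hy⟩ := hY (e ∘ f ∘ r) (he.comp (hf.comp hr))
  exact ⟨r y, by rw [← hre (f (r y))]; exact congrArg r hy⟩

end FixedPoints

section Products

variable {ι : Type*} [Fintype ι] [DecidableEq ι] {S : ι → Type*} [∀ i, Fintype (S i)]

/-- The joint distribution of independent random choices with distributions `σ i`. -/
def productDistribution (σ : ∀ i, stdSimplex ℝ (S i)) : stdSimplex ℝ (∀ i, S i) :=
  ⟨fun p => ∏ i, σ i (p i), fun p => Finset.prod_nonneg fun i _ => stdSimplex.zero_le (σ i) (p i),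
    by simp only [← Fintype.piFinset_univ, ← Finset.prod_univ_sum, stdSimplex.sum_eq_one,
      Finset.prod_const_one]⟩

theorem sum_piFinset_productDistribution (σ : ∀ i, stdSimplex ℝ (S i)) (t : ∀ i, Finset (S i)) :
    ∑ p ∈ Fintype.piFinset t, productDistribution σ p = ∏ i, ∑ a ∈ t i, σ i a :=
  (Finset.prod_univ_sum t fun i a => σ i a).symm

theorem sum_filter_productDistribution [∀ i, DecidableEq (S i)] (σ : ∀ i, stdSimplex ℝ (S i))
    {t : ∀ i, Finset (S i)} {k : ι} (hk : t k = Finset.univ) (a : S k) :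
    ∑ p ∈ Fintype.piFinset t with p k = a, productDistribution σ p =
      σ k a * ∑ p ∈ Fintype.piFinset t, productDistribution σ p := by
  rw [← Fintype.piFinset_update_singleton_eq_filter_piFinset_eq t k (hk ▸ Finset.mem_univ a)]
  simp only [sum_piFinset_productDistribution]
  rw [← Finset.mul_prod_erase _ _ (Finset.mem_univ k), ← Finset.mul_prod_erase _ _
    (Finset.mem_univ k), hk, stdSimplex.sum_eq_one, one_mul, Function.update_self,
    Finset.sum_singleton]
  congr 1
  refine Finset.prod_congr rfl fun i hi => ?_
  rw [Function.update_of_ne (Finset.ne_of_mem_erase hi)]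

theorem map_eval_productDistribution (σ : ∀ i, stdSimplex ℝ (S i)) (k : ι) :
    stdSimplex.map (fun p : ∀ i, S i => p k) (productDistribution σ) = σ k := by
  ext a
  have h := sum_filter_productDistribution σ (t := fun _ => Finset.univ) (k := k) rfl a
  rw [Fintype.piFinset_univ, stdSimplex.sum_eq_one, mul_one] at h
  rwa [stdSimplex.map_coe, FunOnFinite.linearMap_apply_apply]

theorem continuous_productDistribution :
    Continuous (productDistribution : (∀ i, stdSimplex ℝ (S i)) → stdSimplex ℝ (∀ i, S i)) :=
  Continuous.subtype_mk (continuous_pi fun p => continuous_finsetProd _ fun i _ =>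
    (continuous_stdSimplex_apply (p i)).comp (continuous_apply i)) _

end Products

theorem exists_fixedPoint_pi_stdSimplex {ι : Type*} [Finite ι] {S : ι → Type*}
    [∀ i, Fintype (S i)] [∀ i, Nonempty (S i)]
    {f : (∀ i, stdSimplex ℝ (S i)) → ∀ i, stdSimplex ℝ (S i)} (hf : Continuous f) :
    ∃ σ, f σ = σ := by
  have := Fintype.ofFinite ι
  set r : stdSimplex ℝ (∀ i, S i) → ∀ i, stdSimplex ℝ (S i) :=
    fun x i => stdSimplex.map (fun p => p i) x
  have hr : Continuous r := continuous_pi fun i => stdSimplex.continuous_map _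
  have hre : Function.LeftInverse r productDistribution :=
    fun σ => funext (map_eval_productDistribution σ)
  exact exists_fixedPoint_of_leftInverse (fun _ hg => exists_fixedPoint_stdSimplex hg)
    continuous_productDistribution hr hre hf

section Nash

open scoped Matrix

variable {T : Type*} [Fintype T] {v : T → ℝ} {x : stdSimplex ℝ T}

theorem one_add_sum_max_zero_pos (r : T → ℝ) : 0 < 1 + ∑ t, max 0 (r t) :=
  add_pos_of_pos_of_nonneg one_pos (Finset.sum_nonneg fun _ _ => le_max_left _ _)

/-- Nash's improvement map: a mixed strategy `x` is shifted towards the pure strategies whose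
payoff, given by `v`, exceeds the average payoff under `x`. -/
def improve (v : T → ℝ) (x : stdSimplex ℝ T) : stdSimplex ℝ T :=
  ⟨fun s => (x s + max 0 (v s - ⇑x ⬝ᵥ v)) / (1 + ∑ t, max 0 (v t - ⇑x ⬝ᵥ v)),
    fun s => div_nonneg (add_nonneg (stdSimplex.zero_le x s) (le_max_left _ _))
      (one_add_sum_max_zero_pos _).le,
    by
      rw [← Finset.sum_div, Finset.sum_add_distrib, stdSimplex.sum_eq_one]
      exact div_self (one_add_sum_max_zero_pos _).ne'⟩

theorem continuous_improve {X : Type*} [TopologicalSpace X] {V : X → T → ℝ} {σ : X → stdSimplex ℝ T}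
    (hV : Continuous V) (hσ : Continuous σ) : Continuous fun x => improve (V x) (σ x) := by
  have hσ' : Continuous fun x => (⇑(σ x) : T → ℝ) := continuous_subtype_val.comp hσ
  have hgain : ∀ s, Continuous fun x => max 0 (V x s - ⇑(σ x) ⬝ᵥ V x) := fun s =>
    continuous_const.max (((continuous_apply s).comp hV).sub (hσ'.dotProduct hV))
  refine Continuous.subtype_mk (continuous_pi fun s => ?_) _
  exact (((continuous_apply s).comp hσ').add (hgain s)).div
    (continuous_const.add (continuous_finsetSum _ fun t _ => hgain t))
    fun x => (one_add_sum_max_zero_pos _).ne'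

theorem sum_mul_sub_dotProduct_eq_zero (v : T → ℝ) (x : stdSimplex ℝ T) :
    ∑ s, x s * (v s - ⇑x ⬝ᵥ v) = 0 := by
  simp only [mul_sub, Finset.sum_sub_distrib, ← Finset.sum_mul, stdSimplex.sum_eq_one, one_mul]
  exact sub_self _

theorem max_zero_mul_self (r : ℝ) : max 0 r * r = max 0 r ^ 2 := by
  rcases max_cases 0 r with h | h <;> rw [h.1] <;> ring

theorem le_dotProduct_of_improve_eq (h : improve v x = x) (s : T) : v s ≤ ⇑x ⬝ᵥ v := by
  set r : T → ℝ := fun s => max 0 (v s - ⇑x ⬝ᵥ v) with hr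
  set R := ∑ t, r t
  have gain_eq : ∀ s, r s = R * x s := fun s => by
    have hs : (x s + r s) / (1 + R) = x s := congrArg (fun y : stdSimplex ℝ T => y s) h
    rw [div_eq_iff (one_add_sum_max_zero_pos _).ne'] at hs
    linarith
  have sum_sq : ∑ s, r s ^ 2 = 0 := calc
    ∑ s, r s ^ 2 = ∑ s, R * (x s * (v s - ⇑x ⬝ᵥ v)) := by
      refine Finset.sum_congr rfl fun s _ => ?_
      rw [← mul_assoc, ← gain_eq, hr, max_zero_mul_self]
    _ = 0 := by rw [← Finset.mul_sum, sum_mul_sub_dotProduct_eq_zero, mul_zero]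
  have hs : r s ^ 2 = 0 :=
    (Finset.sum_eq_zero_iff_of_nonneg fun _ _ => sq_nonneg _).1 sum_sq s (Finset.mem_univ s)
  linarith [pow_eq_zero_iff two_ne_zero |>.1 hs, le_max_right 0 (v s - ⇑x ⬝ᵥ v)]

theorem dotProduct_le_of_forall_le {c : ℝ} (h : ∀ s, v s ≤ c) (x : stdSimplex ℝ T) :
    ⇑x ⬝ᵥ v ≤ c := calc
  ⇑x ⬝ᵥ v ≤ ∑ s, x s * c :=
    Finset.sum_le_sum fun s _ => mul_le_mul_of_nonneg_left (h s) (stdSimplex.zero_le x s)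
  _ = c := by rw [← Finset.sum_mul, stdSimplex.sum_eq_one, one_mul]

theorem exists_mixed_equilibrium {ι : Type*} [Finite ι] {S : ι → Type*} [∀ i, Fintype (S i)]
    [∀ i, Nonempty (S i)] {V : ∀ i, (∀ j, stdSimplex ℝ (S j)) → S i → ℝ}
    (hV : ∀ i, Continuous (V i)) :
    ∃ σ : ∀ i, stdSimplex ℝ (S i), ∀ i (τ : stdSimplex ℝ (S i)),
      ⇑τ ⬝ᵥ V i σ ≤ ⇑(σ i) ⬝ᵥ V i σ := by
  obtain ⟨σ, hσ⟩ := exists_fixedPoint_pi_stdSimplex (f := fun σ i => improve (V i σ) (σ i))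
    (continuous_pi fun i => continuous_improve (hV i) (continuous_apply i))
  exact ⟨σ, fun i => dotProduct_le_of_forall_le (le_dotProduct_of_improve_eq (congrFun hσ i))⟩

end Nash

namespace EFG

variable (G : EFG)

section Records

variable (i : Fin G.n)

/-- Player `i`'s record `X_i(h)` along a complete history. -/
def record (h : List ℕ) : List (ℕ × ℕ) := G.recordFrom i [] h

theorem recordFrom_append (pre l₁ l₂ : List ℕ) :
    G.recordFrom i pre (l₁ ++ l₂) = G.recordFrom i pre l₁ ++ G.recordFrom i (pre ++ l₁) l₂ := by
  induction l₁ generalizing pre with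
  | nil => simp [recordFrom]
  | cons a l₁ ih => simp [recordFrom, ih]

variable {i} {h : List ℕ} {a : ℕ}

theorem record_append_singleton (hP : G.P h = some i) :
    G.record i (h ++ [a]) = G.record i h ++ [(G.infoIdx h, a)] := by
  simp [record, recordFrom_append, recordFrom, hP]

theorem record_append_singleton_of_ne (hP : G.P h ≠ some i) :
    G.record i (h ++ [a]) = G.record i h := by
  simp [record, recordFrom_append, recordFrom, hP]

theorem record_isPrefix_record {h' : List ℕ} (hh : h <+: h') :
    G.record i h <+: G.record i h' := by
  obtain ⟨l, rfl⟩ := hh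
  exact ⟨_, (recordFrom_append G i [] h l).symm⟩

theorem exists_prefix_of_mem_record {p : ℕ × ℕ} (hp : p ∈ G.record i h) :
    ∃ h', h' ++ [p.2] <+: h ∧ G.P h' = some i ∧ G.infoIdx h' = p.1 := by
  induction h using List.reverseRecOn with
  | nil => exact absurd hp List.not_mem_nil
  | append_singleton h a ih =>
    have of_mem (hp : p ∈ G.record i h) :
        ∃ h', h' ++ [p.2] <+: h ++ [a] ∧ G.P h' = some i ∧ G.infoIdx h' = p.1 := by
      obtain ⟨h', hpre, hh'⟩ := ih hp
      exact ⟨h', hpre.trans (List.prefix_append h [a]), hh'⟩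
    by_cases hP : G.P h = some i
    · rw [record_append_singleton G hP, List.mem_append, List.mem_singleton] at hp
      obtain hp | rfl := hp
      · exact of_mem hp
      · exact ⟨h, List.prefix_rfl, hP, rfl⟩
    · exact of_mem (record_append_singleton_of_ne G hP ▸ hp)

end Records

section InformationSets

variable {G} {i : Fin G.n} {h : List ℕ} {a : ℕ}

theorem mem_H_of_append_singleton (ha : h ++ [a] ∈ G.H) : h ∈ G.H :=
  G.prefixClosed _ ha h (List.prefix_append h [a])

theorem infoIdx_lt_of_mem (hP : G.P h = some i) (ha : h ++ [a] ∈ G.H) : G.infoIdx h < G.m i :=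
  G.infoIdx_lt i h (mem_H_of_append_singleton ha) hP ⟨a, ha⟩

theorem mem_Info_infoIdx (hP : G.P h = some i) (ha : h ++ [a] ∈ G.H) :
    h ∈ G.Info i (G.infoIdx h) :=
  (G.info_spec i _ h (infoIdx_lt_of_mem hP ha)).2
    ⟨mem_H_of_append_singleton ha, hP, ⟨a, ha⟩, rfl⟩

theorem mem_infoA_infoIdx (hP : G.P h = some i) (ha : h ++ [a] ∈ G.H) :
    a ∈ G.infoA i (G.infoIdx h) :=
  Finset.mem_sup.2 ⟨h, mem_Info_infoIdx hP ha, Finset.mem_filter.2 ⟨G.act_mem h a ha, ha⟩⟩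

theorem infoA_nonempty {j : ℕ} (hj : j < G.m i) : (G.infoA i j).Nonempty := by
  obtain ⟨h, hh⟩ := G.info_nonempty i j hj
  obtain ⟨-, hP, ⟨a, ha⟩, rfl⟩ := (G.info_spec i j h hj).1 hh
  exact ⟨a, mem_infoA_infoIdx hP ha⟩

theorem PerfectRecall.fst_ne_infoIdx_of_mem_record (hPR : G.PerfectRecall) (hP : G.P h = some i)
    (ha : h ++ [a] ∈ G.H) {p : ℕ × ℕ} (hp : p ∈ G.record i h) : p.1 ≠ G.infoIdx h := by
  intro hpj
  obtain ⟨h', hpre, hP', hj'⟩ := exists_prefix_of_mem_record G hp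
  have ha' : h' ++ [p.2] ∈ G.H := G.prefixClosed h (mem_H_of_append_singleton ha) _ hpre
  have hrecord : G.record i h' = G.record i h :=
    hPR i _ (infoIdx_lt_of_mem hP ha) _ (hpj ▸ hj' ▸ mem_Info_infoIdx hP' ha') _
      (mem_Info_infoIdx hP ha)
  have hlen := (record_isPrefix_record G (i := i) hpre).length_le
  rw [record_append_singleton G hP', hrecord, List.length_append, List.length_singleton] at hlen
  omega

end InformationSets

section RecordProb

/-- The probability with which the behavioral strategy `b` takes all the actions in the record
`L`. -/
def recordProb (b : ℕ → ℕ → ℝ) (L : List (ℕ × ℕ)) : ℝ := (L.map fun p => b p.1 p.2).prod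

theorem recordProb_append (b : ℕ → ℕ → ℝ) (L L' : List (ℕ × ℕ)) :
    recordProb b (L ++ L') = recordProb b L * recordProb b L' := by
  simp [recordProb]

/-- The product of the chance probabilities along `rest`, continuing from the prefix `pre`,
obtained by letting every player take each action with weight one. -/
def chanceProb (pre rest : List ℕ) : ℝ := G.prodAlong (fun _ _ _ => 1) pre rest

theorem moveProb_eq_mul_prod_recordProb (β : G.Profile) (h : List ℕ) (a : ℕ) :
    G.moveProb β h a = G.moveProb (fun _ _ _ => 1) h a *
      ∏ i, recordProb (β i) (if G.P h = some i then [(G.infoIdx h, a)] else []) := by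
  cases hP : G.P h with
  | none => simp [moveProb, recordProb, hP]
  | some k =>
    rw [Finset.prod_eq_single_of_mem k (Finset.mem_univ k)]
    · simp [moveProb, recordProb, hP]
    · intro i _ hi
      simp [recordProb, hi.symm]

theorem prodAlong_eq_mul_prod_recordProb (β : G.Profile) (pre rest : List ℕ) :
    G.prodAlong β pre rest =
      G.chanceProb pre rest * ∏ i, recordProb (β i) (G.recordFrom i pre rest) := by
  induction rest generalizing pre with
  | nil => simp [prodAlong, chanceProb, recordProb, recordFrom]
  | cons a rest ih =>
    simp only [prodAlong, chanceProb, recordFrom, recordProb_append,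
      Finset.prod_mul_distrib] at ih ⊢
    rw [ih, moveProb_eq_mul_prod_recordProb]
    ring

theorem omega_eq_mul_prod_recordProb (β : G.Profile) (h : List ℕ) :
    G.omega β h = G.chanceProb [] h * ∏ i, recordProb (β i) (G.record i h) :=
  prodAlong_eq_mul_prod_recordProb G β [] h

end RecordProb

section PureStrategies

variable (i : Fin G.n)

/-- Pure strategies of player `i`; mixed strategies are the points of
`stdSimplex ℝ (G.PureStrategy i)`. -/
abbrev PureStrategy : Type := ∀ j : Fin (G.m i), {a // a ∈ G.infoA i j}

/-- The actions at the `j`-th information set that do not contradict the record `L`. -/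
def consistentActions (L : List (ℕ × ℕ)) (j : Fin (G.m i)) : Finset {a // a ∈ G.infoA i j} :=
  {a | ∀ p ∈ L, p.1 = j → (a : ℕ) = p.2}

/-- The pure strategies that take the recorded action at every information set in the
record `L`. They form a box, so that product distributions can be summed over them. -/
def consistentStrategies (L : List (ℕ × ℕ)) : Finset (G.PureStrategy i) :=
  Fintype.piFinset (G.consistentActions i L)

theorem mem_consistentStrategies {L : List (ℕ × ℕ)} {s : G.PureStrategy i} :
    s ∈ G.consistentStrategies i L ↔ ∀ j : Fin (G.m i), ∀ p ∈ L, p.1 = j → (s j : ℕ) = p.2 := by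
  simp [consistentStrategies, consistentActions]

variable {G i}

instance : Nonempty (G.PureStrategy i) :=
  ⟨fun j => ⟨_, (infoA_nonempty j.isLt).choose_spec⟩⟩

theorem consistentStrategies_nil : G.consistentStrategies i [] = Finset.univ := by
  ext s
  simp [mem_consistentStrategies]

theorem consistentStrategies_append_singleton (L : List (ℕ × ℕ)) {j : Fin (G.m i)}
    (a : {a // a ∈ G.infoA i j}) :
    G.consistentStrategies i (L ++ [((j : ℕ), (a : ℕ))]) =
      {s ∈ G.consistentStrategies i L | s j = a} := by
  ext s
  simp only [Finset.mem_filter, mem_consistentStrategies, List.mem_append, List.mem_singleton]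
  constructor
  · exact fun hs => ⟨fun k p hp => hs k p (.inl hp), Subtype.ext (hs j _ (.inr rfl) rfl)⟩
  · rintro ⟨hL, hj⟩ k p (hp | rfl) hpk
    · exact hL k p hp hpk
    · obtain rfl : j = k := Fin.ext hpk
      exact congrArg Subtype.val hj

/-- The probability with which a mixed strategy selects a pure strategy consistent with the
record `L`. -/
def recordWeight (σ : stdSimplex ℝ (G.PureStrategy i)) (L : List (ℕ × ℕ)) : ℝ :=
  ∑ s ∈ G.consistentStrategies i L, σ s

variable (σ : stdSimplex ℝ (G.PureStrategy i)) (L : List (ℕ × ℕ))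

theorem recordWeight_nil : recordWeight σ [] = 1 := by
  rw [recordWeight, consistentStrategies_nil, stdSimplex.sum_eq_one]

theorem recordWeight_nonneg : 0 ≤ recordWeight σ L :=
  Finset.sum_nonneg fun s _ => stdSimplex.zero_le σ s

theorem sum_recordWeight_append_singleton {j : ℕ} (hj : j < G.m i) :
    ∑ a ∈ G.infoA i j, recordWeight σ (L ++ [(j, a)]) = recordWeight σ L := by
  lift j to Fin (G.m i) using hj
  rw [← Finset.sum_coe_sort]
  simp only [recordWeight, consistentStrategies_append_singleton]
  exact Finset.sum_fiberwise _ _ _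

theorem continuous_recordWeight :
    Continuous fun σ : stdSimplex ℝ (G.PureStrategy i) => recordWeight σ L :=
  continuous_finsetSum _ fun s _ => continuous_stdSimplex_apply s

end PureStrategies

section Kuhn

variable {G} {i : Fin G.n} {b : ℕ → ℕ → ℝ} {σ : stdSimplex ℝ (G.PureStrategy i)}

/-- A behavioral strategy realizes a mixed strategy if both follow every history of the game
with the same probability, as far as the moves of player `i` are concerned. -/
def Realizes (b : ℕ → ℕ → ℝ) (σ : stdSimplex ℝ (G.PureStrategy i)) : Prop :=
  ∀ h ∈ G.H, recordProb b (G.record i h) = recordWeight σ (G.record i h)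

theorem realizes_of_recordWeight_append_singleton
    (hb : ∀ h a, G.P h = some i → h ++ [a] ∈ G.H →
      recordWeight σ (G.record i h ++ [(G.infoIdx h, a)]) =
        b (G.infoIdx h) a * recordWeight σ (G.record i h)) :
    Realizes b σ := by
  intro h
  induction h using List.reverseRecOn with
  | nil => exact fun _ => (recordWeight_nil σ).symm
  | append_singleton h a ih =>
    intro ha
    have ih := ih (mem_H_of_append_singleton ha)
    by_cases hP : G.P h = some i
    · rw [record_append_singleton G hP, hb h a hP ha, recordProb_append, ih, mul_comm]
      simp [recordProb]
    · rwa [record_append_singleton_of_ne G hP]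

/-- Player `i`'s record at an information set, read off at an arbitrary history in it; under
perfect recall the choice is immaterial. -/
def infoRecord (i : Fin G.n) (j : ℕ) : List (ℕ × ℕ) :=
  if hI : (G.Info i j).Nonempty then G.record i hI.choose else []

theorem PerfectRecall.infoRecord_infoIdx (hPR : G.PerfectRecall) {h : List ℕ} {a : ℕ}
    (hP : G.P h = some i) (ha : h ++ [a] ∈ G.H) :
    infoRecord i (G.infoIdx h) = G.record i h := by
  have hh := mem_Info_infoIdx hP ha
  rw [infoRecord, dif_pos ⟨h, hh⟩]
  exact hPR i _ (infoIdx_lt_of_mem hP ha) _ (Exists.choose_spec (p := (· ∈ G.Info i _)) _) h hh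

/-- The behavioral strategy that plays at each information set the action of a pure strategy
drawn from `σ`, conditionally on that information set not being excluded by the pure strategy. The
uniform distribution is used where the condition has probability zero. -/
def conditionalStrategy (σ : stdSimplex ℝ (G.PureStrategy i)) (j a : ℕ) : ℝ :=
  if recordWeight σ (infoRecord i j) = 0 then ((G.infoA i j).card : ℝ)⁻¹
  else recordWeight σ (infoRecord i j ++ [(j, a)]) / recordWeight σ (infoRecord i j)

theorem isBehStrategy_conditionalStrategy (σ : stdSimplex ℝ (G.PureStrategy i)) :
    G.IsBehStrategy i (conditionalStrategy σ) := by
  intro j hj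
  unfold conditionalStrategy
  split_ifs with hw
  · refine ⟨fun a _ => by positivity, ?_⟩
    rw [Finset.sum_const, nsmul_eq_mul]
    exact mul_inv_cancel₀ (Nat.cast_ne_zero.2 (infoA_nonempty hj).card_ne_zero)
  · refine ⟨fun a _ => div_nonneg (recordWeight_nonneg σ _) (recordWeight_nonneg σ _), ?_⟩
    rw [← Finset.sum_div, sum_recordWeight_append_singleton σ _ hj, div_self hw]

theorem PerfectRecall.realizes_conditionalStrategy (hPR : G.PerfectRecall)
    (σ : stdSimplex ℝ (G.PureStrategy i)) : Realizes (conditionalStrategy σ) σ := by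
  refine realizes_of_recordWeight_append_singleton fun h a hP ha => ?_
  rw [conditionalStrategy, hPR.infoRecord_infoIdx hP ha]
  split_ifs with hw
  · have hsum := sum_recordWeight_append_singleton σ (G.record i h) (infoIdx_lt_of_mem hP ha)
    rw [hw, Finset.sum_eq_zero_iff_of_nonneg fun _ _ => recordWeight_nonneg σ _] at hsum
    rw [hsum a (mem_infoA_infoIdx hP ha), hw, mul_zero]
  · rw [div_mul_cancel₀ _ hw]

/-- The distribution over the actions at the `j`-th information set prescribed by the behavioral
strategy `b`. -/
def localStrategy (hb : G.IsBehStrategy i b) (j : Fin (G.m i)) :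
    stdSimplex ℝ {a // a ∈ G.infoA i j} :=
  ⟨fun a => b j a, fun a => (hb j j.isLt).1 a a.2,
    (Finset.sum_coe_sort (G.infoA i j) (b j)).trans (hb j j.isLt).2⟩

/-- The mixed strategy that draws the actions at the different information sets independently,
with the probabilities prescribed by the behavioral strategy `b`. -/
def independentStrategy (hb : G.IsBehStrategy i b) : stdSimplex ℝ (G.PureStrategy i) :=
  productDistribution (localStrategy hb)

theorem PerfectRecall.realizes_independentStrategy (hPR : G.PerfectRecall)
    (hb : G.IsBehStrategy i b) : Realizes b (independentStrategy hb) := by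
  refine realizes_of_recordWeight_append_singleton fun h a hP ha => ?_
  obtain ⟨j, hj⟩ : ∃ j : Fin (G.m i), (j : ℕ) = G.infoIdx h := ⟨⟨_, infoIdx_lt_of_mem hP ha⟩, rfl⟩
  have haj : a ∈ G.infoA i j := hj ▸ mem_infoA_infoIdx hP ha
  have unconstrained : G.consistentActions i (G.record i h) j = Finset.univ :=
    Finset.filter_true_of_mem fun _ _ p hp hpj =>
      (hPR.fst_ne_infoIdx_of_mem_record hP ha hp (hpj.trans hj)).elim
  rw [← hj, recordWeight, consistentStrategies_append_singleton _ ⟨a, haj⟩]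
  exact sum_filter_productDistribution (localStrategy hb) unconstrained ⟨a, haj⟩

end Kuhn

section Equilibrium

open scoped Matrix

variable {G} {σ : ∀ p, stdSimplex ℝ (G.PureStrategy p)} {β : G.Profile} {i : Fin G.n}

/-- The expected payoff of player `i` from the pure strategy `s` when every other player `p` uses
the mixed strategy `σ p`. -/
def purePayoff (i : Fin G.n) (σ : ∀ p, stdSimplex ℝ (G.PureStrategy p)) (s : G.PureStrategy i) :
    ℝ :=
  ∑ z ∈ G.Zset with s ∈ G.consistentStrategies i (G.record i z),
    G.u i z * (G.chanceProb [] z * ∏ p ∈ Finset.univ.erase i, recordWeight (σ p) (G.record p z))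

theorem continuous_purePayoff (i : Fin G.n) :
    Continuous (purePayoff i) :=
  continuous_pi fun _ => continuous_finsetSum _ fun z _ => continuous_const.mul <|
    continuous_const.mul <| continuous_finsetProd _ fun p _ =>
      (continuous_recordWeight (G.record p z)).comp (continuous_apply p)

theorem dotProduct_purePayoff (τ : stdSimplex ℝ (G.PureStrategy i)) :
    ⇑τ ⬝ᵥ purePayoff i σ = ∑ z ∈ G.Zset, G.u i z * (G.chanceProb [] z *
      (recordWeight τ (G.record i z) *
        ∏ p ∈ Finset.univ.erase i, recordWeight (σ p) (G.record p z))) := by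
  simp only [dotProduct, purePayoff, recordWeight, Finset.mul_sum, Finset.sum_mul]
  rw [Finset.sum_comm' (t' := G.Zset) (s' := fun z => G.consistentStrategies i (G.record i z))
    (by simp [and_comm])]
  exact Finset.sum_congr rfl fun z _ => Finset.sum_congr rfl fun s _ => by ring

theorem uExp_eq_dotProduct_purePayoff {τ : stdSimplex ℝ (G.PureStrategy i)}
    (hβ : ∀ p ≠ i, Realizes (β p) (σ p)) (hτ : Realizes (β i) τ) :
    G.uExp i β = ⇑τ ⬝ᵥ purePayoff i σ := by
  rw [dotProduct_purePayoff, uExp]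
  refine Finset.sum_congr rfl fun z hz => ?_
  have hzH : z ∈ G.H := Finset.mem_of_mem_filter z hz
  rw [omega_eq_mul_prod_recordProb, ← Finset.mul_prod_erase _ _ (Finset.mem_univ i), hτ z hzH,
    Finset.prod_congr rfl fun p hp => hβ p (Finset.ne_of_mem_erase hp) z hzH]

end Equilibrium

end EFG

/-- Every finite extensive-form game with perfect recall possesses a Nash equilibrium in
behavioral strategies. -/
theorem stmt5 (G : EFG) (hPR : G.PerfectRecall) :
    ∃ β : G.Profile, G.IsNash β := by
  obtain ⟨σ, hσ⟩ := exists_mixed_equilibrium G.continuous_purePayoff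
  refine ⟨fun i => EFG.conditionalStrategy (σ i),
    fun i => EFG.isBehStrategy_conditionalStrategy (σ i), fun i b hb => ?_⟩
  rw [EFG.uExp_eq_dotProduct_purePayoff
    (fun p _ => hPR.realizes_conditionalStrategy (σ p)) (hPR.realizes_conditionalStrategy (σ i)),
    EFG.uExp_eq_dotProduct_purePayoff (σ := σ) (τ := EFG.independentStrategy hb)]
  · exact hσ i _
  · intro p hp
    simpa only [EFG.replace, if_neg hp] using hPR.realizes_conditionalStrategy (σ p)
  · simpa only [EFG.replace, if_pos] using hPR.realizes_independentStrategy hb
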